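/- Let M ∈ ℝ^{m×n} be entrywise nonnegative such that no column of M is a scalar multiple of another column. Then every optimal solution B* of problem (tigrel) for M satisfies ρ(B*) < 1; consequently Q = I − B* is invertible and Q⁻¹ is entrywise nonnegative (Q is inverse positive). -/

import Mathlib

open Matrix BigOperators

/-- The column `j` of `M` normalized to unit ℓ₁-norm. -/
noncomputable def normCol {m n : ℕ} (M : Matrix (Fin m) (Fin n) ℝ) (j : Fin n) : Fin m → ℝ :=
  (∑ i, |M i j|)⁻¹ • fun i => M i j

/-- Column `j` of `M` is nonzero. -/
def colNZ {m n : ℕ} (M : Matrix (Fin m) (Fin n) ℝ) (j : Fin n) : Prop :=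
  (fun i => M i j) ≠ 0

/-- `θ(M)`: the set of ℓ₁-normalized nonzero columns of `M`. -/
noncomputable def thetaCols {m n : ℕ} (M : Matrix (Fin m) (Fin n) ℝ) : Set (Fin m → ℝ) :=
  {x | ∃ j, colNZ M j ∧ x = normCol M j}

/-- The nonnegative rank of `M`. -/
noncomputable def nnRank {m n : ℕ} (M : Matrix (Fin m) (Fin n) ℝ) : ℕ :=
  sInf {r : ℕ | ∃ U : Matrix (Fin m) (Fin r) ℝ, ∃ V : Matrix (Fin r) (Fin n) ℝ,
    (∀ i j, 0 ≤ U i j) ∧ (∀ i j, 0 ≤ V i j) ∧ M = U * V}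

/-- The squared Frobenius norm. -/
noncomputable def frobSq {m n : ℕ} (A : Matrix (Fin m) (Fin n) ℝ) : ℝ :=
  ∑ i, ∑ j, (A i j) ^ 2

/-- Feasibility for problem (tigrel): `B ≥ 0`, zero diagonal, `MB ≤ M` entrywise. -/
def TigrelFeasible {m n : ℕ} (M : Matrix (Fin m) (Fin n) ℝ)
    (B : Matrix (Fin n) (Fin n) ℝ) : Prop :=
  (∀ i j, 0 ≤ B i j) ∧ (∀ i, B i i = 0) ∧ ∀ i j, (M * B) i j ≤ M i j

/-- Optimality for problem (tigrel): feasible and minimizes `‖M - MB‖_F²`. -/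
def TigrelOpt {m n : ℕ} (M : Matrix (Fin m) (Fin n) ℝ)
    (B : Matrix (Fin n) (Fin n) ℝ) : Prop :=
  TigrelFeasible M B ∧
    ∀ B', TigrelFeasible M B' → frobSq (M - M * B) ≤ frobSq (M - M * B')

/-- A monomial matrix: permutation of a diagonal matrix with positive diagonal. -/
def IsMonomial {k : ℕ} (P : Matrix (Fin k) (Fin k) ℝ) : Prop :=
  ∃ (σ : Equiv.Perm (Fin k)) (d : Fin k → ℝ), (∀ i, 0 < d i) ∧
    ∀ i j, P i j = if i = σ j then d j else 0

/-- Every extreme point of `conv(θ(M))` equals `θ(M_{:j})` for exactly one column `j`. -/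
def NonRepeatedVertices {m n : ℕ} (M : Matrix (Fin m) (Fin n) ℝ) : Prop :=
  ∀ x ∈ Set.extremePoints ℝ (convexHull ℝ (thetaCols M)),
    ∃! j : Fin n, colNZ M j ∧ x = normCol M j

/-- Uniqueness of size-`r` exact NMF up to permutation and scaling. -/
def UniqueNMF {m n : ℕ} (r : ℕ) (M : Matrix (Fin m) (Fin n) ℝ) : Prop :=
  ∀ (U₁ U₂ : Matrix (Fin m) (Fin r) ℝ) (V₁ V₂ : Matrix (Fin r) (Fin n) ℝ),
    (∀ i j, 0 ≤ U₁ i j) → (∀ i j, 0 ≤ V₁ i j) →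
    (∀ i j, 0 ≤ U₂ i j) → (∀ i j, 0 ≤ V₂ i j) →
    M = U₁ * V₁ → M = U₂ * V₂ →
    ∃ P : Matrix (Fin r) (Fin r) ℝ, IsMonomial P ∧ U₂ = U₁ * P ∧ V₂ = P⁻¹ * V₁

/-- Separability of a factorization, expressed as a property of the right factor `V`. -/
def SeparableFactor {r n : ℕ} (V : Matrix (Fin r) (Fin n) ℝ) : Prop :=
  ∀ i : Fin r, ∃ j : Fin n, V i j ≠ 0 ∧ ∀ i' : Fin r, i' ≠ i → V i' j = 0

/-- The Frobenius norm. -/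
noncomputable def frobNorm {m n : ℕ} (A : Matrix (Fin m) (Fin n) ℝ) : ℝ :=
  Real.sqrt (∑ i, ∑ j, (A i j) ^ 2)

/-- The Euclidean (ℓ₂) norm of a vector. -/
noncomputable def vecNorm2 {n : ℕ} (x : Fin n → ℝ) : ℝ :=
  Real.sqrt (∑ i, (x i) ^ 2)

/-- The spectral (operator 2-) norm of a matrix. -/
noncomputable def specNorm {m n : ℕ} (A : Matrix (Fin m) (Fin n) ℝ) : ℝ :=
  sSup {c : ℝ | ∃ x : Fin n → ℝ, vecNorm2 x ≤ 1 ∧ c = vecNorm2 (A.mulVec x)}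

/-!
Suppose `0 ≤ x ≤ B x`. Feasibility gives `M x ≤ M (B x) = (M B) x ≤ M x`, so equality holds
throughout: the columns of `M B` and `M` agree wherever `x` is positive, and `B x` agrees with
`x` at every nonzero column of `M`. Hence, on the set `S` of indices where both `x` and the
column of `M` are nonzero, each normalized column is a convex combination of other normalized
columns from `S`. These points are distinct, and an extreme point of their convex hull is not
such a combination, so `S` is empty. Then `x` lives on the zero columns of `M`, of which there
is at most one, and the zero diagonal of `B` forces `x = 0`. Thus `B` expands no nonzero
nonnegative vector. Taking absolute values in `B v = z v` now gives `|z| < 1`, and applying the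
same property to the negative part of a column of `(1 - B)⁻¹` shows that this part vanishes.
-/

section General

lemma exists_notMem_convexHull_sdiff_singleton {E : Type*} [AddCommGroup E] [Module ℝ E]
    [TopologicalSpace E] [T2Space E] [IsTopologicalAddGroup E] [ContinuousSMul ℝ E]
    [LocallyConvexSpace ℝ E] {A : Set E} (hA : A.Finite) (hne : A.Nonempty) :
    ∃ a ∈ A, a ∉ convexHull ℝ (A \ {a}) := by
  obtain ⟨a, ha⟩ :=
    (hA.isCompact_convexHull ℝ).extremePoints_nonempty (convexHull_nonempty_iff.mpr hne)
  refine ⟨a, extremePoints_convexHull_subset ha, fun hmem => ?_⟩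
  have hsub : convexHull ℝ (A \ {a}) ⊆ convexHull ℝ A := convexHull_mono Set.sdiff_subset
  have hext : a ∈ (convexHull ℝ (A \ {a})).extremePoints ℝ :=
    inter_extremePoints_subset_extremePoints_of_subset hsub ⟨hmem, ha⟩
  exact (extremePoints_convexHull_subset hext).2 rfl

variable {R ι κ : Type*} [Fintype ι]

lemma mulVec_eq_sum_smul_col [CommSemiring R] (A : Matrix κ ι R) (v : ι → R) :
    A *ᵥ v = ∑ j, v j • A.col j := by
  ext i
  simp only [mulVec, dotProduct, Finset.sum_apply, Pi.smul_apply, col_apply, smul_eq_mul, mul_comm]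

variable [Semiring R] [PartialOrder R]

lemma apply_eq_of_dotProduct_eq [IsStrictOrderedRing R] {a u v : ι → R} (ha : 0 ≤ a) (huv : u ≤ v)
    (h : a ⬝ᵥ u = a ⬝ᵥ v) {k : ι} (hk : 0 < a k) : u k = v k := by
  have hle : ∀ i ∈ Finset.univ, a i * u i ≤ a i * v i := fun i _ =>
    mul_le_mul_of_nonneg_left (huv i) (ha i)
  have heq : a k * u k = a k * v k := (Finset.sum_eq_sum_iff_of_le hle).mp h k (Finset.mem_univ k)
  by_contra hne
  exact (mul_lt_mul_of_pos_left (lt_of_le_of_ne (huv k) hne) hk).ne heq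

lemma mulVec_le_mulVec_of_nonneg [IsOrderedRing R] {A : Matrix κ ι R} (hA : ∀ i j, 0 ≤ A i j)
    {u v : ι → R} (huv : u ≤ v) : A *ᵥ u ≤ A *ᵥ v := fun i =>
  dotProduct_le_dotProduct_of_nonneg_left huv (hA i)

end General

/-- The matrix `B` expands no nonzero nonnegative vector. For `B ≥ 0` this is the condition
`ρ(B) < 1` in Collatz–Wielandt form, stated without eigenvalues. -/
def IsExpansionFree {ι : Type*} [Fintype ι] (B : Matrix ι ι ℝ) : Prop :=
  ∀ x : ι → ℝ, 0 ≤ x → x ≤ B *ᵥ x → x = 0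

section Spectral

variable {ι : Type*} [Fintype ι] {B : Matrix ι ι ℝ}

lemma norm_map_algebraMap_mulVec_le (𝕜 : Type*) [NormedField 𝕜] [NormedAlgebra ℝ 𝕜]
    (hB : ∀ i j, 0 ≤ B i j) (v : ι → 𝕜) (k : ι) :
    ‖(B.map (algebraMap ℝ 𝕜) *ᵥ v) k‖ ≤ (B *ᵥ fun j => ‖v j‖) k :=
  calc ‖∑ j, algebraMap ℝ 𝕜 (B k j) * v j‖
      ≤ ∑ j, ‖algebraMap ℝ 𝕜 (B k j) * v j‖ := norm_sum_le _ _
    _ = ∑ j, B k j * ‖v j‖ := by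
      simp only [norm_mul, norm_algebraMap', Real.norm_of_nonneg (hB k _)]

namespace IsExpansionFree

lemma nonneg_of_mulVec_le (h : IsExpansionFree B) (hB : ∀ i j, 0 ≤ B i j) {y : ι → ℝ}
    (hy : B *ᵥ y ≤ y) : 0 ≤ y := by
  have hneg : -y ≤ B *ᵥ y⁻ :=
    calc -y ≤ -(B *ᵥ y) := neg_le_neg hy
      _ = B *ᵥ (-y) := (mulVec_neg y B).symm
      _ ≤ B *ᵥ y⁻ := mulVec_le_mulVec_of_nonneg hB (neg_le_negPart y)
  have hzero : 0 ≤ B *ᵥ y⁻ := by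
    simpa only [mulVec_zero] using mulVec_le_mulVec_of_nonneg hB (negPart_nonneg y)
  exact negPart_eq_zero.mp (h _ (negPart_nonneg y) (sup_le hneg hzero))

variable [DecidableEq ι]

lemma norm_lt_one_of_mem_spectrum {𝕜 : Type*} [NormedField 𝕜] [NormedAlgebra ℝ 𝕜]
    (h : IsExpansionFree B) (hB : ∀ i j, 0 ≤ B i j) {z : 𝕜}
    (hz : z ∈ spectrum 𝕜 (B.map (algebraMap ℝ 𝕜))) : ‖z‖ < 1 := by
  by_contra! hge
  rw [← spectrum_toLin', ← Module.End.hasEigenvalue_iff_mem_spectrum] at hz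
  obtain ⟨v, hv⟩ := hz.exists_hasEigenvector
  have hexpand : (fun k => ‖v k‖) ≤ B *ᵥ fun k => ‖v k‖ := fun k =>
    calc ‖v k‖ ≤ ‖z‖ * ‖v k‖ := le_mul_of_one_le_left (norm_nonneg _) hge
      _ = ‖(B.map (algebraMap ℝ 𝕜) *ᵥ v) k‖ := by
        rw [← toLin'_apply, hv.apply_eq_smul, Pi.smul_apply, smul_eq_mul, norm_mul]
      _ ≤ _ := norm_map_algebraMap_mulVec_le 𝕜 hB v k
  have hnorm := h _ (fun k => norm_nonneg (v k)) hexpand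
  exact hv.2 (funext fun k => norm_eq_zero.mp (congrFun hnorm k))

lemma spectralRadius_lt_one (𝕜 : Type*) [NormedField 𝕜] [NormedAlgebra ℝ 𝕜]
    (h : IsExpansionFree B) (hB : ∀ i j, 0 ≤ B i j) :
    spectralRadius 𝕜 (B.map (algebraMap ℝ 𝕜)) < 1 := by
  have hfin := finite_spectrum (B.map (algebraMap ℝ 𝕜))
  have hsup : spectralRadius 𝕜 (B.map (algebraMap ℝ 𝕜)) =
      hfin.toFinset.sup fun z => (‖z‖₊ : ENNReal) := by
    simp only [spectralRadius, Finset.sup_eq_iSup, hfin.mem_toFinset]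
  rw [hsup, Finset.sup_lt_iff zero_lt_one]
  intro z hz
  exact_mod_cast h.norm_lt_one_of_mem_spectrum hB (hfin.mem_toFinset.mp hz)

lemma isUnit_det_one_sub (h : IsExpansionFree B) (hB : ∀ i j, 0 ≤ B i j) :
    IsUnit (1 - B).det := by
  rw [← isUnit_iff_isUnit_det]
  by_contra hunit
  have hmem : (1 : ℝ) ∈ spectrum ℝ (B.map (algebraMap ℝ ℝ)) := by
    simpa [spectrum.mem_iff] using hunit
  exact (h.norm_lt_one_of_mem_spectrum hB hmem).ne norm_one

lemma inv_one_sub_nonneg (h : IsExpansionFree B) (hB : ∀ i j, 0 ≤ B i j) (i j : ι) :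
    0 ≤ (1 - B)⁻¹ i j := by
  have hcol : (1 - B) *ᵥ (1 - B)⁻¹.col j = Pi.single j 1 := by
    rw [← mulVec_single_one, mulVec_mulVec, mul_nonsing_inv _ (h.isUnit_det_one_sub hB),
      one_mulVec]
  refine h.nonneg_of_mulVec_le hB (y := (1 - B)⁻¹.col j) (sub_nonneg.mp ?_) i
  rw [← one_mulVec ((1 - B)⁻¹.col j), mulVec_mulVec, mul_one, ← sub_mulVec, hcol]
  exact Pi.single_nonneg.mpr zero_le_one

end IsExpansionFree

end Spectral

section NormCol

variable {m n : ℕ} {M : Matrix (Fin m) (Fin n) ℝ}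

lemma colNZ_iff_sum_abs_pos {j : Fin n} : colNZ M j ↔ 0 < ∑ i, |M i j| := by
  rw [colNZ, Function.ne_iff]
  simp [Finset.sum_pos_iff_of_nonneg]

lemma colNZ.exists_pos (hM : ∀ i j, 0 ≤ M i j) {j : Fin n} (hj : colNZ M j) :
    ∃ i, 0 < M i j := by
  obtain ⟨i, hi⟩ := Function.ne_iff.mp hj
  exact ⟨i, (hM i j).lt_of_ne' hi⟩

lemma sum_abs_smul_normCol (j : Fin n) : (∑ i, |M i j|) • normCol M j = M.col j := by
  by_cases hj : colNZ M j
  · exact smul_inv_smul₀ (colNZ_iff_sum_abs_pos.mp hj).ne' _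
  · have hcol : M.col j = 0 := not_not.mp hj
    simp [normCol, ← col_apply, hcol]

lemma exists_pos_col_eq_smul_of_normCol_eq {j k : Fin n} (hj : colNZ M j) (hk : colNZ M k)
    (h : normCol M j = normCol M k) : ∃ c : ℝ, 0 < c ∧ M.col j = c • M.col k := by
  rw [colNZ_iff_sum_abs_pos] at hj hk
  refine ⟨_, mul_pos hj (inv_pos.mpr hk), ?_⟩
  rw [mul_smul, ← sum_abs_smul_normCol j, h]
  rfl

lemma normCol_mem_convexHull (hM : ∀ i j, 0 ≤ M i j) {b : Fin n → ℝ} (hb : 0 ≤ b) {j : Fin n}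
    (hj : colNZ M j) (hcol : M *ᵥ b = M.col j) :
    normCol M j ∈ convexHull ℝ (normCol M '' {k | 0 < b k ∧ colNZ M k}) := by
  let s : Fin n → ℝ := fun k => ∑ i, |M i k|
  let w : Fin n → ℝ := fun k => (s j)⁻¹ * (b k * s k)
  have hs : ∀ k, 0 ≤ s k := fun k => Finset.sum_nonneg fun i _ => abs_nonneg _
  have hsj : 0 < s j := colNZ_iff_sum_abs_pos.mp hj
  have hw : ∀ k, 0 ≤ w k := fun k =>
    mul_nonneg (inv_nonneg.mpr hsj.le) (mul_nonneg (hb k) (hs k))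
  have hsum : ∑ k, b k * s k = s j := by
    simp only [s, abs_of_nonneg (hM _ _), Finset.mul_sum]
    rw [Finset.sum_comm]
    refine Finset.sum_congr rfl fun i _ => ?_
    simpa only [mulVec, dotProduct, col_apply, mul_comm] using congrFun hcol i
  have hw1 : ∑ᶠ k, w k = 1 := by
    rw [finsum_eq_sum_of_fintype, ← Finset.mul_sum, hsum, inv_mul_cancel₀ hsj.ne']
  have hcomb : ∑ᶠ k, w k • normCol M k = normCol M j :=
    calc ∑ᶠ k, w k • normCol M k
        = (s j)⁻¹ • ∑ k, b k • M.col k := by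
          simp only [finsum_eq_sum_of_fintype, w, mul_smul, ← Finset.smul_sum, s,
            sum_abs_smul_normCol]
      _ = (s j)⁻¹ • M.col j := by rw [← hcol, mulVec_eq_sum_smul_col]
      _ = normCol M j := rfl
  rw [← hcomb]
  refine (convex_convexHull ℝ _).finsum_mem hw hw1 fun k hk => subset_convexHull ℝ _ ⟨k, ?_, rfl⟩
  have hbs : b k * s k ≠ 0 := right_ne_zero_of_mul hk
  exact ⟨(hb k).lt_of_ne' (left_ne_zero_of_mul hbs),
    colNZ_iff_sum_abs_pos.mpr ((hs k).lt_of_ne' (right_ne_zero_of_mul hbs))⟩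

end NormCol

namespace TigrelFeasible

variable {m n : ℕ} {M : Matrix (Fin m) (Fin n) ℝ} {B : Matrix (Fin n) (Fin n) ℝ} {x : Fin n → ℝ}

lemma mul_mulVec_le (hB : TigrelFeasible M B) (hx : 0 ≤ x) : (M * B) *ᵥ x ≤ M *ᵥ x := fun i =>
  dotProduct_le_dotProduct_of_nonneg_right (hB.2.2 i) hx

lemma mulVec_mulVec_eq (hM : ∀ i j, 0 ≤ M i j) (hB : TigrelFeasible M B) (hx : 0 ≤ x)
    (hxB : x ≤ B *ᵥ x) : M *ᵥ (B *ᵥ x) = M *ᵥ x := by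
  refine le_antisymm ?_ (mulVec_le_mulVec_of_nonneg hM hxB)
  rw [mulVec_mulVec]
  exact hB.mul_mulVec_le hx

lemma mulVec_apply_eq (hM : ∀ i j, 0 ≤ M i j) (hB : TigrelFeasible M B) (hx : 0 ≤ x)
    (hxB : x ≤ B *ᵥ x) {k : Fin n} (hk : colNZ M k) : (B *ᵥ x) k = x k := by
  obtain ⟨i, hi⟩ := hk.exists_pos hM
  exact (apply_eq_of_dotProduct_eq (hM i) hxB
    (congrFun (hB.mulVec_mulVec_eq hM hx hxB) i).symm hi).symm

lemma mulVec_col_eq (hM : ∀ i j, 0 ≤ M i j) (hB : TigrelFeasible M B) (hx : 0 ≤ x)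
    (hxB : x ≤ B *ᵥ x) {j : Fin n} (hj : 0 < x j) : M *ᵥ B.col j = M.col j := by
  funext i
  refine apply_eq_of_dotProduct_eq (u := (M * B) i) hx (hB.2.2 i) ?_ hj
  rw [dotProduct_comm x, dotProduct_comm x]
  have h := congrFun (hB.mulVec_mulVec_eq hM hx hxB) i
  rwa [mulVec_mulVec] at h

lemma pos_of_entry_pos (hM : ∀ i j, 0 ≤ M i j) (hB : TigrelFeasible M B) (hx : 0 ≤ x)
    (hxB : x ≤ B *ᵥ x) {j k : Fin n} (hj : 0 < x j) (hkj : 0 < B k j) (hk : colNZ M k) :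
    0 < x k :=
  calc 0 < B k j * x j := mul_pos hkj hj
    _ ≤ (B *ᵥ x) k := Finset.single_le_sum
      (fun l _ => mul_nonneg (hB.1 k l) (hx l)) (Finset.mem_univ j)
    _ = x k := hB.mulVec_apply_eq hM hx hxB hk

lemma not_colNZ_of_pos (hM : ∀ i j, 0 ≤ M i j)
    (hray : ∀ i j, i ≠ j → ∀ c : ℝ, 0 < c → M.col i ≠ c • M.col j) (hB : TigrelFeasible M B)
    (hx : 0 ≤ x) (hxB : x ≤ B *ᵥ x) {j : Fin n} (hj : 0 < x j) : ¬colNZ M j := by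
  intro hjM
  let S : Set (Fin n) := {k | 0 < x k ∧ colNZ M k}
  obtain ⟨_, ⟨l, ⟨hl, hlM⟩, rfl⟩, hnot⟩ :=
    exists_notMem_convexHull_sdiff_singleton ((Set.toFinite S).image (normCol M))
      ⟨_, j, ⟨hj, hjM⟩, rfl⟩
  refine hnot (convexHull_mono ?_ (normCol_mem_convexHull hM (fun k => hB.1 k l) hlM
    (hB.mulVec_col_eq hM hx hxB hl)))
  rintro _ ⟨k, ⟨hkl, hkM⟩, rfl⟩
  refine ⟨⟨k, ⟨hB.pos_of_entry_pos hM hx hxB hl hkl hkM, hkM⟩, rfl⟩, fun heq => ?_⟩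
  have hne : k ≠ l := by
    rintro rfl
    exact hkl.ne' (hB.2.1 k)
  obtain ⟨c, hc, hkc⟩ := exists_pos_col_eq_smul_of_normCol_eq hkM hlM heq
  exact hray k l hne c hc hkc

theorem isExpansionFree (hM : ∀ i j, 0 ≤ M i j)
    (hray : ∀ i j, i ≠ j → ∀ c : ℝ, 0 < c → M.col i ≠ c • M.col j) (hB : TigrelFeasible M B) :
    IsExpansionFree B := by
  intro x hx hxB
  by_contra hne
  obtain ⟨j, hj⟩ := Function.ne_iff.mp hne
  have hzero : ∀ k, x k ≠ 0 → M.col k = 0 := fun k hk =>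
    not_not.mp (hB.not_colNZ_of_pos hM hray hx hxB ((hx k).lt_of_ne' hk))
  have hsupp : ∀ k, k ≠ j → x k = 0 := by
    intro k hkj
    by_contra hk
    exact hray k j hkj 1 one_pos (by rw [hzero k hk, hzero j hj, smul_zero])
  have hterm : ∀ k, B j k * x k = 0 := by
    intro k
    rcases eq_or_ne k j with rfl | hkj
    · rw [hB.2.1 k, zero_mul]
    · rw [hsupp k hkj, mul_zero]
  have hBx : (B *ᵥ x) j = 0 := by
    simp only [mulVec, dotProduct, hterm, Finset.sum_const_zero]
  exact hj (le_antisymm ((hxB j).trans hBx.le) (hx j))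

end TigrelFeasible

theorem stmt12_general {m n : ℕ} (M : Matrix (Fin m) (Fin n) ℝ) (hM : ∀ i j, 0 ≤ M i j)
    (hray : ∀ i j, i ≠ j → ∀ c : ℝ, 0 < c → M.col i ≠ c • M.col j)
    (B : Matrix (Fin n) (Fin n) ℝ) (hB : TigrelFeasible M B) :
    spectralRadius ℂ (B.map (fun x => (x : ℂ))) < 1 ∧
    IsUnit (1 - B).det ∧ ∀ i j, 0 ≤ (1 - B)⁻¹ i j := by
  have hfree : IsExpansionFree B := hB.isExpansionFree hM hray
  exact ⟨hfree.spectralRadius_lt_one ℂ hB.1, hfree.isUnit_det_one_sub hB.1,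
    hfree.inv_one_sub_nonneg hB.1⟩

/-- if no column of `M` is a scalar multiple of another, every optimal
solution `B*` of (tigrel) has spectral radius `< 1`, so `Q = I − B*` is inverse
positive. -/
theorem stmt12 {m n : ℕ} (M : Matrix (Fin m) (Fin n) ℝ) (hM : ∀ i j, 0 ≤ M i j)
    (hnomult : ∀ i j : Fin n, i ≠ j → ∀ c : ℝ,
      (fun p => M p i) ≠ c • fun p => M p j)
    (B : Matrix (Fin n) (Fin n) ℝ) (hB : TigrelOpt M B) :
    spectralRadius ℂ (B.map (fun x => (x : ℂ))) < 1 ∧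
    IsUnit (1 - B).det ∧ ∀ i j, 0 ≤ (1 - B)⁻¹ i j :=
  stmt12_general M hM (fun i j hij c _ => hnomult i j hij c) B hB.1
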